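/- MoV_SC satisfies neither w-degree-consistency nor equal-w-degree-consistency: there exist an n, an n-weighted tournament T and alternatives x,y with wdeg(x) > wdeg(y) but MoV_SC(x,T) < 0 < MoV_SC(y,T); and there exist an n, an n-weighted tournament T' and alternatives x,y with wdeg(x) = wdeg(y) but MoV_SC(x,T') < 0 < MoV_SC(y,T'). -/

import Mathlib

/-!
If `c` has a positive margin over every other alternative (a Condorcet winner), then `c` has no
incoming majority edge, so no dominance cycle passes through `c`; hence every edge leaving `c`
survives in `M_D` and `c` is the unique Split Cycle winner (`mem_SC_iff_of_condorcet`). On the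
other hand, the margin of victory has the expected strict sign as soon as it is attained by some
reversal, because a reversal of size `0` changes nothing (`sInf_pos_of_exists`), and any two
tournaments on the same vertices differ by a reversal (`exists_apply_eq`).

It therefore suffices to have a Condorcet winner with a small weighted outdegree. With `n = 2k+1`
and three alternatives, let `0` beat both others with the smallest possible margin `k+1` to `k`,
and let `1` beat `2` unanimously. The weighted outdegrees of `0` and `1` are `2k+2` and `3k+1`:
these are equal for `k = 1`, and the second is larger for `k = 2`.
-/

/-- An `n`-weighted tournament on vertex set `V`. -/
structure WTournament (V : Type) (n : ℕ) where
  w : V → V → ℤ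
  diag : ∀ x, w x x = 0
  nonneg : ∀ x y, x ≠ y → 0 ≤ w x y
  compl : ∀ x y, x ≠ y → w x y + w y x = (n : ℤ)

namespace WTournament

variable {V : Type} {n : ℕ}

/-- The (majority) margin of `x` over `y`. -/
def margin (T : WTournament V n) (x y : V) : ℤ :=
  T.w x y - T.w y x

/-- The Borda score of `x`. -/
def sBO [Fintype V] (T : WTournament V n) (x : V) : ℤ :=
  ∑ z, T.w x z

/-- The set of Borda winners. -/
def BO [Fintype V] (T : WTournament V n) : Set V :=
  {x | ∀ y, T.sBO y ≤ T.sBO x}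

/-- The weighted outdegree of `x`. -/
def wdeg [Fintype V] (T : WTournament V n) (x : V) : ℤ :=
  ∑ z, T.w x z

/-- `x` w-covers `y`. -/
def WCovers (T : WTournament V n) (x y : V) : Prop :=
  0 < T.margin x y ∧ ∀ z, z ≠ x → z ≠ y → T.w y z ≤ T.w x z

/-- The weighted uncovered set. -/
def wUC (T : WTournament V n) : Set V :=
  {x | ∀ y, ¬ T.WCovers y x}

/-- The consecutive edges of a vertex sequence. -/
def seqEdges (l : List V) : List (V × V) :=
  l.zip l.tail

/-- A dominance cycle. -/
def IsDominanceCycle (T : WTournament V n) (l : List V) : Prop :=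
  2 ≤ l.length ∧ l.head? = l.getLast? ∧ ∀ e ∈ seqEdges l, 0 < T.margin e.1 e.2

/-- The splitting number of a cycle. -/
def splitNum (T : WTournament V n) (l : List V) : ℤ :=
  ((seqEdges l).map fun e => T.margin e.1 e.2).foldr min (n : ℤ)

/-- `e` is a splitting edge of the cycle `l`. -/
def IsSplittingEdge (T : WTournament V n) (l : List V) (e : V × V) : Prop :=
  e ∈ seqEdges l ∧ T.margin e.1 e.2 = T.splitNum l

/-- `(x, y)` is an edge of the margin graph surviving the deletion of every splitting
edge of every dominance cycle (i.e. an edge of `M_D`). -/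
def EdgeMD (T : WTournament V n) (x y : V) : Prop :=
  0 < T.margin x y ∧
    ¬ ∃ l : List V, T.IsDominanceCycle l ∧ T.IsSplittingEdge l (x, y)

/-- The set of Split Cycle winners. -/
def SC (T : WTournament V n) : Set V :=
  {x | ∀ y, ¬ T.EdgeMD y x}

/-- A reversal function for the tournament `T`. -/
structure Reversal (T : WTournament V n) where
  r : V → V → ℤ
  antisymm : ∀ x y, r x y = - r y x
  lo : ∀ x y, x ≠ y → 0 ≤ T.w x y + r x y
  hi : ∀ x y, x ≠ y → T.w x y + r x y ≤ (n : ℤ)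

/-- The size of a reversal function. -/
def Reversal.size [Fintype V] {T : WTournament V n} (R : Reversal T) : ℤ :=
  ∑ x : V, ∑ y : V, max (R.r x y) 0

/-- The tournament obtained from `T` by the reversal `R`. -/
def apply (T : WTournament V n) (R : Reversal T) : WTournament V n :=
  { w := fun x y => T.w x y + R.r x y
    diag := fun x => by
      have h := R.antisymm x x
      have h1 := T.diag x
      show T.w x x + R.r x x = 0
      linarith
    nonneg := fun x y h => R.lo x y h
    compl := fun x y h => by
      have h1 := R.antisymm x y
      have h2 := T.compl x y h
      show (T.w x y + R.r x y) + (T.w y x + R.r y x) = (n : ℤ)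
      linarith }

/-- `R` witnesses the margin of victory of `a`: it is a destructive reversal set if
`a` is a winner and a constructive reversal set if `a` is a non-winner. -/
def IsMoVWitness (S : WTournament V n → Set V) (T : WTournament V n) (a : V)
    (R : Reversal T) : Prop :=
  a ∈ S T ↔ a ∉ S (T.apply R)

open Classical in
/-- The margin of victory of `a` in `T` with respect to the tournament solution `S`:
the minimum size of a destructive reversal set for winners, and minus the minimum
size of a constructive reversal set for non-winners. -/
noncomputable def MoV [Fintype V] (S : WTournament V n → Set V)
    (T : WTournament V n) (a : V) : ℤ :=
  if a ∈ S T then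
    sInf {k : ℤ | ∃ R : Reversal T, IsMoVWitness S T a R ∧ R.size = k}
  else
    - sInf {k : ℤ | ∃ R : Reversal T, IsMoVWitness S T a R ∧ R.size = k}

/-- The reversal values with `R (a, b) = 1`, `R (b, a) = -1` and `0` elsewhere. -/
def singleFun [DecidableEq V] (a b : V) : V → V → ℤ := fun p q =>
  if p = a ∧ q = b then 1 else if p = b ∧ q = a then -1 else 0

/-- The reversal values with `Q (b, c) = -1`, `Q (c, b) = 1`, `Q (a, c) = 1`,
`Q (c, a) = -1` and `0` elsewhere. -/
def transferFun [DecidableEq V] (a b c : V) : V → V → ℤ := fun p q =>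
  if p = b ∧ q = c then -1
  else if p = c ∧ q = b then 1
  else if p = a ∧ q = c then 1
  else if p = c ∧ q = a then -1
  else 0

/-- A monotonic tournament solution. -/
def IsMonotonic [DecidableEq V] (S : WTournament V n → Set V) : Prop :=
  ∀ (T : WTournament V n) (a b : V) (R : Reversal T),
    a ≠ b → a ∈ S T → T.w a b < (n : ℤ) → R.r = singleFun a b →
    a ∈ S (T.apply R)

/-- A transfer-monotonic tournament solution. -/
def IsTransferMonotonic [DecidableEq V] (S : WTournament V n → Set V) : Prop :=
  ∀ (T : WTournament V n) (a b c : V) (Q : Reversal T),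
    a ≠ b → a ≠ c → b ≠ c → a ∈ S T → 0 < T.w b c → T.w a c < (n : ℤ) →
    Q.r = transferFun a b c → a ∈ S (T.apply Q)

end WTournament

namespace WTournament

/-- `c` is a Condorcet winner: it has a positive margin over every other alternative. -/
def IsCondorcet {V : Type} {n : ℕ} (T : WTournament V n) (c : V) : Prop :=
  ∀ z, z ≠ c → 0 < T.margin c z

/-- In a closed vertex sequence, a vertex with an outgoing edge has an incoming edge. -/
theorem exists_seqEdge_into {V : Type} {l : List V} (hl : l.head? = l.getLast?) {c z : V}
    (h : (c, z) ∈ seqEdges l) : ∃ u, (u, c) ∈ seqEdges l := by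
  unfold seqEdges at *
  obtain ⟨i, hi, he⟩ := List.mem_iff_getElem.1 h
  have hi' := hi
  simp only [List.length_zip, List.length_tail] at hi'
  simp only [List.getElem_zip, List.getElem_tail, Prod.mk.injEq] at he
  have key : ∀ j, ∀ hj : j + 1 < l.length, l[j + 1] = c →
      ∃ u, (u, c) ∈ l.zip l.tail := by
    intro j hj hc
    refine ⟨l[j], List.mem_iff_getElem.2 ⟨j, ?_, ?_⟩⟩
    · simp only [List.length_zip, List.length_tail]; omega
    · simp only [List.getElem_zip, List.getElem_tail, hc]
  rcases i with _ | i
  · -- The edge starts at the head of the sequence, which is also its last vertex.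
    refine key (l.length - 2) (by omega) ?_
    rw [List.head?_eq_getElem?, List.getLast?_eq_getElem?] at hl
    rw [List.getElem?_eq_getElem (by omega), List.getElem?_eq_getElem (by omega)] at hl
    have h2 : l.length - 2 + 1 = l.length - 1 := by omega
    simp only [h2]
    rw [← he.1]
    exact (Option.some.inj hl).symm
  · exact key i (by omega) he.1

theorem not_margin_pos_of_condorcet {V : Type} {n : ℕ} {T : WTournament V n} {c : V}
    (hc : T.IsCondorcet c) (u : V) : ¬ 0 < T.margin u c := by
  intro h
  rcases eq_or_ne u c with rfl | hu
  · simp [margin] at h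
  · have := hc u hu
    unfold margin at *
    omega

theorem mem_SC_iff_of_condorcet {V : Type} {n : ℕ} {T : WTournament V n} {c : V}
    (hc : T.IsCondorcet c) (z : V) : z ∈ T.SC ↔ z = c := by
  constructor
  · intro hz
    by_contra hne
    refine hz c ⟨hc z hne, ?_⟩
    rintro ⟨l, ⟨-, hl, hpos⟩, he, -⟩
    obtain ⟨u, hu⟩ := exists_seqEdge_into hl he
    exact not_margin_pos_of_condorcet hc u (hpos _ hu)
  · rintro rfl u hu
    exact not_margin_pos_of_condorcet hc u hu.1

theorem ext_w {V : Type} {n : ℕ} {T T' : WTournament V n} (h : ∀ x y, T.w x y = T'.w x y) :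
    T = T' := by
  have : T.w = T'.w := by funext x y; exact h x y
  cases T
  cases T'
  simpa using this

/-- Any tournament on the same vertices can be reached by a reversal. -/
theorem exists_apply_eq {V : Type} {n : ℕ} (T T' : WTournament V n) :
    ∃ R : Reversal T, T.apply R = T' := by
  refine ⟨⟨fun x y => T'.w x y - T.w x y, ?_, ?_, ?_⟩, ?_⟩
  · intro x y
    rcases eq_or_ne x y with rfl | h
    · simp [T.diag, T'.diag]
    · have := T.compl x y h
      have := T'.compl x y h
      omega
  · intro x y h
    have := T'.nonneg x y h
    omega
  · intro x y h
    have := T'.compl x y h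
    have := T'.nonneg y x h.symm
    omega
  · apply ext_w
    intro x y
    simp [apply]

theorem Reversal.size_nonneg {V : Type} [Fintype V] {n : ℕ} {T : WTournament V n}
    (R : Reversal T) : 0 ≤ R.size :=
  Finset.sum_nonneg fun _ _ => Finset.sum_nonneg fun _ _ => le_max_right _ _

theorem apply_eq_self_of_size_eq_zero {V : Type} [Fintype V] {n : ℕ} {T : WTournament V n}
    {R : Reversal T} (h : R.size = 0) : T.apply R = T := by
  have hle : ∀ x y, R.r x y ≤ 0 := by
    intro x y
    have h1 := (Finset.sum_eq_zero_iff_of_nonneg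
      (fun x _ => Finset.sum_nonneg fun y _ => le_max_right (R.r x y) 0)).1 h x (Finset.mem_univ x)
    have h2 := (Finset.sum_eq_zero_iff_of_nonneg
      (fun y _ => le_max_right (R.r x y) 0)).1 h1 y (Finset.mem_univ y)
    exact max_eq_right_iff.1 h2
  apply ext_w
  intro x y
  have := hle x y
  have := hle y x
  have := R.antisymm x y
  simp only [apply]
  omega

/-- The minimum size of a reversal changing the status of `a` is positive. The tournament `T'`
guarantees that such a reversal exists, so that `sInf` is not the infimum of the empty set. -/
theorem sInf_pos_of_exists {V : Type} [Fintype V] {n : ℕ} {S : WTournament V n → Set V}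
    {T T' : WTournament V n} {a : V} (h : a ∈ S T ↔ a ∉ S T') :
    0 < sInf {k : ℤ | ∃ R : Reversal T, IsMoVWitness S T a R ∧ R.size = k} := by
  obtain ⟨R, hR⟩ := exists_apply_eq T T'
  have hmem := Int.csInf_mem
    (s := {k : ℤ | ∃ R : Reversal T, IsMoVWitness S T a R ∧ R.size = k})
    ⟨R.size, R, by unfold IsMoVWitness; rwa [hR], rfl⟩
    ⟨0, by rintro k ⟨Q, -, rfl⟩; exact Q.size_nonneg⟩
  obtain ⟨Q, hQ, hs⟩ := hmem
  rw [← hs]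
  refine lt_of_le_of_ne Q.size_nonneg fun h0 => ?_
  unfold IsMoVWitness at hQ
  rw [apply_eq_self_of_size_eq_zero h0.symm] at hQ
  tauto

/-- A Condorcet winner `c` of `T` has a positive margin of victory, and any other `x` a negative
one. The tournament `T'`, in which `x` is a Condorcet winner, provides the reversals. -/
theorem MoV_SC_signs {V : Type} [Fintype V] {n : ℕ} {T T' : WTournament V n} {c x : V}
    (hc : T.IsCondorcet c) (hx : T'.IsCondorcet x) (hne : x ≠ c) :
    MoV SC T x < 0 ∧ 0 < MoV SC T c := by
  have h1 : x ∉ T.SC := by rwa [mem_SC_iff_of_condorcet hc]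
  have h2 : c ∈ T.SC := (mem_SC_iff_of_condorcet hc c).2 rfl
  have h3 : x ∈ T'.SC := (mem_SC_iff_of_condorcet hx x).2 rfl
  have h4 : c ∉ T'.SC := by rw [mem_SC_iff_of_condorcet hx]; exact hne.symm
  unfold MoV
  rw [if_neg h1, if_pos h2]
  refine ⟨neg_lt_zero.2 (sInf_pos_of_exists (T' := T') ?_), sInf_pos_of_exists (T' := T') ?_⟩ <;>
    tauto

/-- The `(2k+1)`-weighted tournament in which `0` beats `1` and `2` by `k+1` to `k` and `1` beats
`2` by `2k+1` to `0`. -/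
def narrow (k : ℕ) : WTournament (Fin 3) (2 * k + 1) where
  w := ![![0, k + 1, k + 1], ![k, 0, 2 * k + 1], ![k, 0, 0]]
  diag := by intro x; fin_cases x <;> simp
  nonneg := by intro x y _; fin_cases x <;> fin_cases y <;> simp <;> omega
  compl := by
    intro x y h
    fin_cases x <;> fin_cases y <;> simp at h ⊢ <;> omega

/-- The tournament obtained from `T` by renaming the alternatives along `σ`. -/
def relabel {V : Type} {n : ℕ} (T : WTournament V n) (σ : Equiv.Perm V) : WTournament V n where
  w x y := T.w (σ x) (σ y)
  diag _ := T.diag _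
  nonneg _ _ h := T.nonneg _ _ (σ.injective.ne h)
  compl _ _ h := T.compl _ _ (σ.injective.ne h)

theorem narrow_condorcet (k : ℕ) : (narrow k).IsCondorcet 0 := by
  intro z hz
  fin_cases z <;> simp [margin, narrow] at hz ⊢

theorem relabel_condorcet {V : Type} {n : ℕ} {T : WTournament V n} (σ : Equiv.Perm V) {c x : V}
    (hc : T.IsCondorcet c) (hx : σ x = c) : (T.relabel σ).IsCondorcet x := by
  intro z hz
  subst hx
  exact hc (σ z) (σ.injective.ne hz)

theorem narrow_signs (k : ℕ) : MoV SC (narrow k) 1 < 0 ∧ 0 < MoV SC (narrow k) 0 :=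
  MoV_SC_signs (narrow_condorcet k)
    (relabel_condorcet (Equiv.swap 0 1) (narrow_condorcet k) (Equiv.swap_apply_right 0 1))
    (by decide)

end WTournament

/-- `MoV_SC` satisfies neither w-degree-consistency nor
equal-w-degree-consistency. -/
theorem MoV_SC_not_degree_consistent :
    (∃ (n m : ℕ) (T : WTournament (Fin m) n) (x y : Fin m),
      T.wdeg y < T.wdeg x ∧
      WTournament.MoV WTournament.SC T x < 0 ∧
      0 < WTournament.MoV WTournament.SC T y) ∧
    (∃ (n m : ℕ) (T : WTournament (Fin m) n) (x y : Fin m),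
      T.wdeg x = T.wdeg y ∧
      WTournament.MoV WTournament.SC T x < 0 ∧
      0 < WTournament.MoV WTournament.SC T y) := by
  refine ⟨⟨_, 3, WTournament.narrow 2, 1, 0, ?_, WTournament.narrow_signs 2⟩,
    ⟨_, 3, WTournament.narrow 1, 1, 0, ?_, WTournament.narrow_signs 1⟩⟩ <;>
  simp [WTournament.wdeg, WTournament.narrow, Fin.sum_univ_three]
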